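/- arXiv:2202.06711 — 2 statements merged into one kernel-verified Lean document; each statement's English description precedes it below -/
import Mathlib

section
/- Let 𝓔 be an abelian category, n ≥ 1, and M an nℤ-cluster tilting subcategory of 𝓔. Then for every object Y ∈ M and every n-exact sequence X : X⁰ → X¹ → ⋯ → Xⁿ → X^{n+1} in M, the induced sequence of abelian groups 0 → Hom(X^{n+1},Y) → Hom(Xⁿ,Y) → ⋯ → Hom(X⁰,Y) → Extⁿ(X^{n+1},Y) → ⋯ → Extⁿ(X⁰,Y) → Ext²ⁿ(X^{n+1},Y) → ⋯ is exact at every spot, where within each row the maps are induced by the differentials of X and each connecting map Ext^{kn}(X⁰,Y) → Ext^{(k+1)n}(X^{n+1},Y) is Yoneda precomposition with the class [X] ∈ Extⁿ(X^{n+1},X⁰). -/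
/-!
Splice the sequence at its images `K⁰ = Y⁰, K¹, …, Kⁿ = Yⁿ⁺¹`. Yoneda precomposition with its class
is the composite of the connecting maps `Ext^{r+j}(Kʲ, Z) → Ext^{r+j+1}(Kʲ⁺¹, Z)`, `0 ≤ j < n`. If
`Ext^a(Yⁱ, Z) = 0` whenever `n ∤ a`, then for `r = kn` each of these is surjective except possibly
the last and injective except possibly the first, so the composite has the kernel of the first one
and the image of the last one. The vanishing also propagates to `Ext^{kn-1}(Kʲ, Z)` for `j < n - 1`
(upwards from `Y⁰`) and to `Ext^{kn+1}(Kʲ, Z)` for `1 < j` (downwards from `Yⁿ⁺¹`), which makes each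
row exact in the middle.
-/

open CategoryTheory CategoryTheory.Abelian CategoryTheory.Limits

universe w v u

namespace NZPaper

variable {C : Type u} [Category.{v} C] [Abelian C] [HasExt.{w} C]

/-- A full (iso-closed) subcategory, encoded as a set of objects, is `n`-cluster tilting if it
admits monic left approximations and epic right approximations and is characterized by the
vanishing of `Ext^i` for `1 ≤ i ≤ n-1` on either side. -/
def IsNClusterTilting (n : ℕ) (M : Set C) : Prop :=
  (∀ ⦃X Y : C⦄, (X ≅ Y) → X ∈ M → Y ∈ M) ∧
  (∀ E : C, ∃ (X : C) (f : E ⟶ X), X ∈ M ∧ Mono f ∧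
      ∀ X' ∈ M, ∀ g : E ⟶ X', ∃ h : X ⟶ X', f ≫ h = g) ∧
  (∀ E : C, ∃ (X : C) (f : X ⟶ E), X ∈ M ∧ Epi f ∧
      ∀ X' ∈ M, ∀ g : X' ⟶ E, ∃ h : X' ⟶ X, h ≫ f = g) ∧
  (∀ E : C, E ∈ M ↔ ∀ Y ∈ M, ∀ i : ℕ, 1 ≤ i → i < n → ∀ e : Ext E Y i, e = 0) ∧
  (∀ E : C, E ∈ M ↔ ∀ Y ∈ M, ∀ i : ℕ, 1 ≤ i → i < n → ∀ e : Ext Y E i, e = 0)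

/-- An `nℤ`-cluster tilting subcategory: in addition `Ext^k` vanishes on `M` for every
`k ≥ 1` not divisible by `n`. -/
def IsNZClusterTilting (n : ℕ) (M : Set C) : Prop :=
  IsNClusterTilting n M ∧
  ∀ X ∈ M, ∀ Y ∈ M, ∀ k : ℕ, 1 ≤ k → ¬ (n ∣ k) → ∀ e : Ext X Y k, e = 0

/-- An exact sequence `0 → Y 0 → Y 1 → ⋯ → Y m → Y (m+1) → 0` in an abelian category,
recorded together with its canonical splicing into short exact sequences
`0 → K i → Y (i+1) → K (i+1) → 0` (`K i` is the image of `d i` for `1 ≤ i ≤ m`,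
`K 0 = Y 0` and `K m = Y (m+1)`).  Only the indices `0, …, m+1` (resp. `0, …, m`) of
`Y` (resp. of the differentials and of `K`) are relevant; the remaining values are junk
(any such exact sequence can be padded by zero objects). -/
structure ExactExtension (C : Type u) [Category.{v} C] [Abelian C] (m : ℕ) where
  Y : ℕ → C
  d : ∀ i, Y i ⟶ Y (i + 1)
  K : ℕ → C
  ι : ∀ i, K i ⟶ Y (i + 1)
  π : ∀ i, Y i ⟶ K i
  hK0 : K 0 = Y 0
  hKm : K m = Y (m + 1)
  zero : ∀ i, ι i ≫ π (i + 1) = 0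
  shortExact : ∀ i, (ShortComplex.mk (ι i) (π (i + 1)) (zero i)).ShortExact
  d0_eq : eqToHom hK0 ≫ d 0 = ι 0
  dmid_eq : ∀ i, 1 ≤ i → i + 1 ≤ m → d i = π i ≫ ι i
  dlast_eq : d m = π m ≫ eqToHom hKm

/-- The Yoneda class of the chain of the first `j` short exact sequences,
obtained as the Yoneda composite of their `Ext¹`-classes. -/
noncomputable def ExactExtension.chainClass {m : ℕ} (T : ExactExtension C m) :
    ∀ j : ℕ, Ext (T.K j) (T.K 0) j
  | 0 => Ext.mk₀ (𝟙 _)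
  | (j + 1) => ((T.shortExact j).extClass).comp (T.chainClass j) (by omega)

/-- The Yoneda class `[ξ] ∈ Ext^m (Y (m+1)) (Y 0)` of the exact sequence
`0 → Y 0 → ⋯ → Y (m+1) → 0`, i.e. the Yoneda composite of the `Ext¹`-classes of the
short exact sequences obtained by splicing it at its images. -/
noncomputable def ExactExtension.extClass {m : ℕ} (T : ExactExtension C m) :
    Ext (T.Y (m + 1)) (T.Y 0) m :=
  (Ext.mk₀ (eqToHom T.hKm.symm)).comp
    ((T.chainClass m).comp (Ext.mk₀ (eqToHom T.hK0)) (add_zero m)) (zero_add m)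

/-- Transport of an `Ext`-class along equalities of objects. -/
noncomputable def extTransport {X X' Z Z' : C} {a : ℕ} (e : Ext X Z a)
    (hX : X = X') (hZ : Z = Z') : Ext X' Z' a :=
  (Ext.mk₀ (eqToHom hX.symm)).comp (e.comp (Ext.mk₀ (eqToHom hZ)) (add_zero a)) (zero_add a)

/-- Exactness, at every spot, of the long sequence of abelian groups
`0 → Hom(X,Y⁰) → ⋯ → Hom(X,Y^{n+1}) → Extⁿ(X,Y⁰) → ⋯ → Extⁿ(X,Y^{n+1}) → Ext^{2n}(X,Y⁰) → ⋯`
(`Ext⁰ = Hom`), where within each row the maps are induced by the differentials of `T` and each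
connecting map `Ext^{kn}(X,Y^{n+1}) → Ext^{(k+1)n}(X,Y⁰)` is Yoneda composition with the class
`[T] ∈ Extⁿ(Y^{n+1},Y⁰)`. -/
def CovLES (n : ℕ) (X : C) (T : ExactExtension C n) : Prop :=
  (Function.Injective fun e : Ext X (T.Y 0) 0 => e.comp (Ext.mk₀ (T.d 0)) (add_zero 0)) ∧
  (∀ k i : ℕ, i < n → Function.Exact
      (fun e : Ext X (T.Y i) (k * n) => e.comp (Ext.mk₀ (T.d i)) (add_zero _))
      (fun e : Ext X (T.Y (i + 1)) (k * n) => e.comp (Ext.mk₀ (T.d (i + 1))) (add_zero _))) ∧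
  (∀ k : ℕ, Function.Exact
      (fun e : Ext X (T.Y n) (k * n) => e.comp (Ext.mk₀ (T.d n)) (add_zero _))
      (fun e : Ext X (T.Y (n + 1)) (k * n) =>
        e.comp T.extClass (show k * n + n = (k + 1) * n by ring))) ∧
  (∀ k : ℕ, Function.Exact
      (fun e : Ext X (T.Y (n + 1)) (k * n) =>
        e.comp T.extClass (show k * n + n = (k + 1) * n by ring))
      (fun e : Ext X (T.Y 0) ((k + 1) * n) => e.comp (Ext.mk₀ (T.d 0)) (add_zero _)))

/-- Exactness, at every spot, of the long sequence of abelian groups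
`0 → Hom(Y^{n+1},Z) → ⋯ → Hom(Y⁰,Z) → Extⁿ(Y^{n+1},Z) → ⋯ → Extⁿ(Y⁰,Z) → Ext^{2n}(Y^{n+1},Z) → ⋯`
(`Ext⁰ = Hom`), where within each row the maps are induced by the differentials of `T` and each
connecting map `Ext^{kn}(Y⁰,Z) → Ext^{(k+1)n}(Y^{n+1},Z)` is Yoneda precomposition with the class
`[T] ∈ Extⁿ(Y^{n+1},Y⁰)`. -/
def ContraLES (n : ℕ) (Z : C) (T : ExactExtension C n) : Prop :=
  (Function.Injective fun e : Ext (T.Y (n + 1)) Z 0 => (Ext.mk₀ (T.d n)).comp e (zero_add 0)) ∧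
  (∀ k i : ℕ, i < n → Function.Exact
      (fun e : Ext (T.Y (i + 2)) Z (k * n) => (Ext.mk₀ (T.d (i + 1))).comp e (zero_add _))
      (fun e : Ext (T.Y (i + 1)) Z (k * n) => (Ext.mk₀ (T.d i)).comp e (zero_add _))) ∧
  (∀ k : ℕ, Function.Exact
      (fun e : Ext (T.Y 1) Z (k * n) => (Ext.mk₀ (T.d 0)).comp e (zero_add _))
      (fun e : Ext (T.Y 0) Z (k * n) =>
        T.extClass.comp e (show n + k * n = (k + 1) * n by ring))) ∧
  (∀ k : ℕ, Function.Exact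
      (fun e : Ext (T.Y 0) Z (k * n) =>
        T.extClass.comp e (show n + k * n = (k + 1) * n by ring))
      (fun e : Ext (T.Y (n + 1)) Z ((k + 1) * n) => (Ext.mk₀ (T.d n)).comp e (zero_add _)))

end NZPaper

namespace NZPaper

lemma not_dvd_mul_add {n c : ℕ} (k : ℕ) (hc : 0 < c) (hcn : c < n) : ¬ n ∣ k * n + c :=
  fun h => Nat.not_dvd_of_pos_of_lt hc hcn ((Nat.dvd_add_right (Nat.dvd_mul_left n k)).mp h)

section Exact

variable {A A' B B' D : Type*} [Zero D]

lemma exact_comp_of_surjective {f : A → B} {g : B → D} {p : A' → A}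
    (h : Function.Exact f g) (hp : Function.Surjective p) : Function.Exact (f ∘ p) g := by
  intro y
  rw [hp.range_comp]
  exact h y

lemma exact_comp_of_exact_comp_of_injective {f : A → B} {φ : B → B'} {g : B' → D}
    (h : Function.Exact (φ ∘ f) g) (hφ : Function.Injective φ) : Function.Exact f (g ∘ φ) := by
  intro y
  rw [Function.comp_apply, h (φ y), Set.range_comp, hφ.mem_set_image]

end Exact

section Ext

variable {C : Type u} [Category.{v} C] [Abelian C] [HasExt.{w} C]

/-- The map `f^* : Ext^a(B, Z) → Ext^a(A, Z)` induced by `f : A ⟶ B`. -/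
noncomputable abbrev extPullback {A B : C} (f : A ⟶ B) (Z : C) (a : ℕ) :
    Ext B Z a →+ Ext A Z a :=
  (Ext.mk₀ f).precomp Z (zero_add a)

lemma coe_precomp_comp {A B D : C} {p q r a b c : ℕ} (α : Ext A B p) (β : Ext B D q) (Z : C)
    (hr : p + q = r) (hb : q + a = b) (hc : p + b = c) :
    ⇑((α.comp β hr).precomp Z (show r + a = c by omega)) = α.precomp Z hc ∘ β.precomp Z hb :=
  funext fun e => Ext.comp_assoc α β e hr hb (by omega)

lemma coe_extPullback_comp {A B D : C} (f : A ⟶ B) (g : B ⟶ D) (Z : C) (a : ℕ) :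
    ⇑(extPullback (f ≫ g) Z a) = extPullback f Z a ∘ extPullback g Z a :=
  funext fun e => (Ext.mk₀_comp_mk₀_assoc f g e).symm

lemma coe_extPullback_id (A Z : C) (a : ℕ) : ⇑(extPullback (𝟙 A) Z a) = id :=
  funext fun e => Ext.mk₀_id_comp e

lemma extPullback_bijective_of_isIso {A B : C} (f : A ⟶ B) [IsIso f] (Z : C) (a : ℕ) :
    Function.Bijective (extPullback f Z a) := by
  refine Function.bijective_iff_has_inverse.mpr ⟨extPullback (inv f) Z a, ?_, ?_⟩
  · rw [Function.leftInverse_iff_comp, ← coe_extPullback_comp, IsIso.inv_hom_id,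
      coe_extPullback_id]
  · rw [Function.rightInverse_iff_comp, ← coe_extPullback_comp, IsIso.hom_inv_id,
      coe_extPullback_id]

section ShortExact

variable {S : ShortComplex C} (hS : S.ShortExact) (Z : C) {a b : ℕ} (h : 1 + a = b)

lemma exact_extPullback_f_extClass :
    Function.Exact (extPullback S.f Z a) (hS.extClass.precomp Z h) :=
  (ShortComplex.ab_exact_iff_function_exact _).mp (Ext.contravariant_sequence_exact₁' hS Z a b h)

include hS in
lemma exact_extPullback_g_extPullback_f (a : ℕ) :
    Function.Exact (extPullback S.g Z a) (extPullback S.f Z a) :=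
  (ShortComplex.ab_exact_iff_function_exact _).mp (Ext.contravariant_sequence_exact₂' hS Z a)

lemma exact_extClass_extPullback_g :
    Function.Exact (hS.extClass.precomp Z h) (extPullback S.g Z b) :=
  (ShortComplex.ab_exact_iff_function_exact _).mp (Ext.contravariant_sequence_exact₃' hS Z a b h)

lemma extClass_precomp_injective [Subsingleton (Ext S.X₂ Z a)] :
    Function.Injective (hS.extClass.precomp Z h) := by
  rw [injective_iff_map_eq_zero]
  intro e he
  obtain ⟨x, rfl⟩ := (exact_extPullback_f_extClass hS Z h e).mp he
  rw [Subsingleton.elim x 0, map_zero]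

lemma extClass_precomp_surjective [Subsingleton (Ext S.X₂ Z b)] :
    Function.Surjective (hS.extClass.precomp Z h) :=
  fun e => (exact_extClass_extPullback_g hS Z h e).mp (Subsingleton.elim _ _)

include hS h in
lemma extPullback_g_injective [Subsingleton (Ext S.X₁ Z a)] :
    Function.Injective (extPullback S.g Z b) := by
  rw [injective_iff_map_eq_zero]
  intro e he
  obtain ⟨x, rfl⟩ := (exact_extClass_extPullback_g hS Z h e).mp he
  rw [Subsingleton.elim x 0, map_zero]

include hS h in
lemma extPullback_f_surjective [Subsingleton (Ext S.X₃ Z b)] :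
    Function.Surjective (extPullback S.f Z a) :=
  fun e => (exact_extPullback_f_extClass hS Z h e).mp (Subsingleton.elim _ _)

end ShortExact

end Ext

namespace ExactExtension

variable {C : Type u} [Category.{v} C] [Abelian C] {n : ℕ} (T : ExactExtension C n)

/-- The canonical epimorphism from `Y i` onto the image `K i` of `d i`. It replaces the field `π`,
whose value at `0` is junk. -/
noncomputable def imageProj : ∀ i, T.Y i ⟶ T.K i
  | 0 => eqToHom T.hK0.symm
  | i + 1 => T.π (i + 1)

/-- The canonical monomorphism from the image `K i` of `d i` into `Y (i + 1)`, for `i ≤ n`. It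
replaces the field `ι`, whose value at `n` is junk. -/
noncomputable def imageIncl (i : ℕ) : T.K i ⟶ T.Y (i + 1) :=
  if h : i = n then eqToHom (h ▸ T.hKm) else T.ι i

lemma imageIncl_of_lt {i : ℕ} (hi : i < n) : T.imageIncl i = T.ι i :=
  dif_neg hi.ne

lemma imageIncl_self : T.imageIncl n = eqToHom T.hKm :=
  dif_pos rfl

lemma d_eq_imageProj_comp_imageIncl (hn : 1 ≤ n) {i : ℕ} (hi : i ≤ n) :
    T.d i = T.imageProj i ≫ T.imageIncl i := by
  rcases hi.eq_or_lt with rfl | hi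
  · obtain ⟨j, rfl⟩ := Nat.exists_eq_add_of_le' hn
    rw [imageIncl_self, T.dlast_eq, imageProj]
  · rw [imageIncl_of_lt T hi]
    cases i with
    | zero => rw [imageProj, ← T.d0_eq, eqToHom_trans_assoc, eqToHom_refl, Category.id_comp]
    | succ i => exact T.dmid_eq (i + 1) (by omega) hi

instance epi_imageProj : ∀ i, Epi (T.imageProj i)
  | 0 => inferInstanceAs (Epi (eqToHom T.hK0.symm))
  | i + 1 => (T.shortExact i).epi_g

lemma epi_d_last (hn : 1 ≤ n) : Epi (T.d n) := by
  rw [T.d_eq_imageProj_comp_imageIncl hn le_rfl, imageIncl_self]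
  infer_instance

variable [HasExt.{w} C] (Z : C)

lemma subsingleton_ext_K_of_le (c j : ℕ)
    (h : ∀ i ≤ j, Subsingleton (Ext (T.Y i) Z (c + i))) : Subsingleton (Ext (T.K j) Z (c + j)) := by
  induction j with
  | zero =>
    rw [T.hK0]
    exact h 0 le_rfl
  | succ j ih =>
    have := ih fun i hi => h i (by omega)
    have := h (j + 1) le_rfl
    exact (extClass_precomp_surjective (T.shortExact j) Z
      (show 1 + (c + j) = c + (j + 1) by omega)).subsingleton

lemma subsingleton_ext_K_of_ge (c j t : ℕ) (ht : j + t = n)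
    (h : ∀ s ≤ t, Subsingleton (Ext (T.Y (j + s + 1)) Z (c + s))) :
    Subsingleton (Ext (T.K j) Z c) := by
  induction t generalizing c j with
  | zero =>
    obtain rfl : j = n := ht
    rw [T.hKm]
    exact h 0 le_rfl
  | succ t ih =>
    have : Subsingleton (Ext (T.K (j + 1)) Z (c + 1)) := by
      refine ih (c + 1) (j + 1) (by omega) fun s hs => ?_
      rw [show j + 1 + s + 1 = j + (s + 1) + 1 by omega, show c + 1 + s = c + (s + 1) by omega]
      exact h (s + 1) (by omega)
    have := h 0 (by omega)
    exact (extClass_precomp_injective (T.shortExact j) Z (add_comm 1 c)).subsingleton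

lemma coe_precomp_chainClass_zero (a : ℕ) :
    ⇑((T.chainClass 0).precomp Z (zero_add a)) = id :=
  coe_extPullback_id (T.K 0) Z a

lemma coe_precomp_chainClass_succ (j : ℕ) {a b c : ℕ} (hb : j + a = b) (hc : 1 + b = c) :
    ⇑((T.chainClass (j + 1)).precomp Z (show j + 1 + a = c by omega)) =
      (T.shortExact j).extClass.precomp Z hc ∘ (T.chainClass j).precomp Z hb :=
  coe_precomp_comp _ _ Z _ hb hc

lemma coe_precomp_extClass {a c : ℕ} (h : n + a = c) :
    ⇑(T.extClass.precomp Z h) = extPullback (eqToHom T.hKm.symm) Z c ∘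
      (T.chainClass n).precomp Z h ∘ extPullback (eqToHom T.hK0) Z a := by
  rw [← coe_precomp_comp _ _ Z (add_zero n) (zero_add a) h]
  exact coe_precomp_comp _ _ Z (zero_add n) h (zero_add c)

lemma exact_extPullback_ι_chainClass_succ (j : ℕ) {a c : ℕ} (hc : j + 1 + a = c)
    (h : ∀ i, 0 < i → i ≤ j → Subsingleton (Ext (T.Y (i + 1)) Z (i + a))) :
    Function.Exact (extPullback (T.ι 0) Z a) ((T.chainClass (j + 1)).precomp Z hc) := by
  induction j generalizing c with
  | zero =>
    rw [coe_precomp_chainClass_succ T Z 0 (zero_add a) (by omega), coe_precomp_chainClass_zero]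
    exact exact_extPullback_f_extClass (T.shortExact 0) Z _
  | succ j ih =>
    rw [coe_precomp_chainClass_succ T Z (j + 1) rfl (by omega)]
    have := h (j + 1) (by omega) le_rfl
    exact (ih rfl fun i h₀ hi => h i h₀ (by omega)).comp_injective _
      (extClass_precomp_injective (T.shortExact (j + 1)) Z _) (map_zero _)

lemma chainClass_precomp_surjective (j : ℕ) {a c : ℕ} (hc : j + a = c)
    (h : ∀ i, 0 < i → i ≤ j → Subsingleton (Ext (T.Y i) Z (i + a))) :
    Function.Surjective ((T.chainClass j).precomp Z hc) := by
  induction j generalizing c with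
  | zero =>
    obtain rfl : a = c := by omega
    rw [coe_precomp_chainClass_zero]
    exact Function.surjective_id
  | succ j ih =>
    subst hc
    rw [coe_precomp_chainClass_succ T Z j rfl (by omega)]
    have := h (j + 1) (by omega) le_rfl
    exact (extClass_precomp_surjective (T.shortExact j) Z _).comp
      (ih rfl fun i h₀ hi => h i h₀ (by omega))

lemma exact_extPullback_d_zero_extClass (hn : 1 ≤ n) {a c : ℕ} (hc : n + a = c)
    (h : ∀ i, 0 < i → i < n → Subsingleton (Ext (T.Y (i + 1)) Z (i + a))) :
    Function.Exact (extPullback (T.d 0) Z a) (T.extClass.precomp Z hc) := by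
  have exact_chain : Function.Exact (extPullback (T.ι 0) Z a) ((T.chainClass n).precomp Z hc) := by
    obtain ⟨m, rfl⟩ := Nat.exists_eq_add_of_le' hn
    exact T.exact_extPullback_ι_chainClass_succ Z m hc fun i h₀ hi => h i h₀ (by omega)
  rw [← T.d0_eq, coe_extPullback_comp] at exact_chain
  rw [coe_precomp_extClass]
  exact (exact_comp_of_exact_comp_of_injective exact_chain
    (extPullback_bijective_of_isIso _ Z a).injective).comp_injective _
      (extPullback_bijective_of_isIso _ Z c).injective (map_zero _)

lemma exact_extClass_extPullback_d_last (hn : 1 ≤ n) {a c : ℕ} (hc : n + a = c)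
    (h : ∀ i, 0 < i → i < n → Subsingleton (Ext (T.Y i) Z (i + a))) :
    Function.Exact (T.extClass.precomp Z hc) (extPullback (T.d n) Z c) := by
  have exact_chain : Function.Exact ((T.chainClass n).precomp Z hc) (extPullback (T.π n) Z c) := by
    obtain ⟨m, rfl⟩ := Nat.exists_eq_add_of_le' hn
    rw [coe_precomp_chainClass_succ T Z m rfl (by omega)]
    exact exact_comp_of_surjective (exact_extClass_extPullback_g (T.shortExact m) Z _)
      (T.chainClass_precomp_surjective Z m rfl fun i h₀ hi => h i h₀ (by omega))
  have extPullback_comp_extClass : extPullback (eqToHom T.hKm) Z c ∘ T.extClass.precomp Z hc =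
      (T.chainClass n).precomp Z hc ∘ extPullback (eqToHom T.hK0) Z a := by
    rw [coe_precomp_extClass, ← Function.comp_assoc, ← coe_extPullback_comp, eqToHom_trans,
      eqToHom_refl, coe_extPullback_id, Function.id_comp]
  rw [T.dlast_eq, coe_extPullback_comp]
  refine exact_comp_of_exact_comp_of_injective ?_ (extPullback_bijective_of_isIso _ Z c).injective
  rw [extPullback_comp_extClass]
  exact exact_comp_of_surjective exact_chain (extPullback_bijective_of_isIso _ Z a).surjective

lemma extPullback_imageProj_injective (i a : ℕ)
    (h : ∀ j b, j + 1 = i → b + 1 = a → Subsingleton (Ext (T.K j) Z b)) :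
    Function.Injective (extPullback (T.imageProj i) Z a) := by
  rcases i with _ | j
  · exact (extPullback_bijective_of_isIso (eqToHom T.hK0.symm) Z a).injective
  rcases a with _ | b
  · exact Ext.precomp_mk₀_injective_of_epi Z _
  · have := h j b rfl rfl
    exact extPullback_g_injective (T.shortExact j) Z (add_comm 1 b)

lemma extPullback_imageIncl_surjective {i : ℕ} (hi : i ≤ n) (a : ℕ)
    (h : i < n → Subsingleton (Ext (T.K (i + 1)) Z (a + 1))) :
    Function.Surjective (extPullback (T.imageIncl i) Z a) := by
  rcases hi.eq_or_lt with rfl | hi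
  · rw [imageIncl_self]
    exact (extPullback_bijective_of_isIso (eqToHom T.hKm) Z a).surjective
  · have := h hi
    rw [imageIncl_of_lt T hi]
    exact extPullback_f_surjective (T.shortExact i) Z (add_comm 1 a)

lemma exact_extPullback_d {i : ℕ} (hi : i < n) (a : ℕ)
    (hproj : Function.Injective (extPullback (T.imageProj i) Z a))
    (hincl : Function.Surjective (extPullback (T.imageIncl (i + 1)) Z a)) :
    Function.Exact (extPullback (T.d (i + 1)) Z a) (extPullback (T.d i) Z a) := by
  rw [T.d_eq_imageProj_comp_imageIncl (by omega) hi.le,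
    T.d_eq_imageProj_comp_imageIncl (by omega) hi, imageIncl_of_lt T hi,
    coe_extPullback_comp, coe_extPullback_comp]
  exact (exact_comp_of_surjective
    (exact_extPullback_g_extPullback_f (T.shortExact i) Z a) hincl).comp_injective _
      hproj (map_zero _)

lemma exact_extPullback_d_of_not_dvd
    (hT : ∀ i ≤ n + 1, ∀ a, ¬ n ∣ a → Subsingleton (Ext (T.Y i) Z a)) (k : ℕ) {i : ℕ} (hi : i < n) :
    Function.Exact (extPullback (T.d (i + 1)) Z (k * n)) (extPullback (T.d i) Z (k * n)) := by
  refine T.exact_extPullback_d Z hi _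
    (T.extPullback_imageProj_injective Z i _ fun j b hj hb => ?_)
    (T.extPullback_imageIncl_surjective Z hi _ fun hi' => ?_)
  · obtain ⟨k, rfl⟩ : ∃ l, k = l + 1 := Nat.exists_eq_succ_of_ne_zero (by rintro rfl; omega)
    obtain rfl : b = k * n + (n - 1 - j) + j := by
      rw [Nat.succ_mul] at hb
      omega
    refine T.subsingleton_ext_K_of_le Z _ j fun s hs => hT s (by omega) _ ?_
    rw [add_assoc]
    exact not_dvd_mul_add k (by omega) (by omega)
  · refine T.subsingleton_ext_K_of_ge Z _ (i + 2) (n - (i + 2)) (by omega) fun s hs =>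
      hT _ (by omega) _ ?_
    rw [add_assoc]
    exact not_dvd_mul_add k (by omega) (by omega)

end ExactExtension

theorem contravariant_les_of_nZ_cluster_tilting_general
    {C : Type u} [Category.{v} C] [Abelian C] [HasExt.{w} C]
    (n : ℕ) (hn : 1 ≤ n) (Z : C)
    (T : ExactExtension C n)
    (hT : ∀ i ≤ n + 1, ∀ a, ¬ n ∣ a → Subsingleton (Ext (T.Y i) Z a)) :
    ContraLES n Z T := by
  have ext_subsingleton : ∀ k i j, j ≤ n + 1 → 0 < i → i < n →
      Subsingleton (Ext (T.Y j) Z (i + k * n)) := fun k i j hj h₀ hi =>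
    hT j hj _ (by rw [add_comm]; exact not_dvd_mul_add k h₀ hi)
  refine ⟨?_, fun k i hi => T.exact_extPullback_d_of_not_dvd Z hT k hi, fun k => ?_, fun k => ?_⟩
  · have := T.epi_d_last hn
    exact Ext.precomp_mk₀_injective_of_epi Z (T.d n)
  · exact T.exact_extPullback_d_zero_extClass Z hn (by ring) fun i h₀ hi =>
      ext_subsingleton k i (i + 1) (by omega) h₀ hi
  · exact T.exact_extClass_extPullback_d_last Z hn (by ring) fun i h₀ hi =>
      ext_subsingleton k i i (by omega) h₀ hi

/-- Let `𝓔` be an abelian category, `n ≥ 1`, and `M` an `nℤ`-cluster tilting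
subcategory of `𝓔`.  Then for every `Y ∈ M` and every `n`-exact sequence
`X : X⁰ → X¹ → ⋯ → Xⁿ → X^{n+1}` in `M` the induced long sequence of abelian groups
`0 → Hom(X^{n+1},Y) → ⋯ → Hom(X⁰,Y) → Extⁿ(X^{n+1},Y) → ⋯ → Extⁿ(X⁰,Y) → Ext^{2n}(X^{n+1},Y) → ⋯`
is exact at every spot. -/
theorem contravariant_les_of_nZ_cluster_tilting
    {C : Type u} [Category.{v} C] [Abelian C] [HasExt.{w} C]
    (n : ℕ) (hn : 1 ≤ n) (M : Set C) (hM : IsNZClusterTilting n M)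
    (Y : C) (hY : Y ∈ M)
    (T : ExactExtension C n) (hT : ∀ i ≤ n + 1, T.Y i ∈ M) :
    ContraLES n Y T := by
  refine contravariant_les_of_nZ_cluster_tilting_general n hn Y T fun i hi a ha =>
    subsingleton_of_forall_eq 0 (hM.2 _ (hT i hi) _ hY a ?_ ha)
  exact Nat.one_le_iff_ne_zero.mpr (by rintro rfl; exact ha (dvd_zero n))

end NZPaper
end

section
/- Let 𝓔 be an abelian category, n ≥ 1, M an nℤ-cluster tilting subcategory of 𝓔, k ≥ 1, and let ξ : 0 → X⁰ → E¹ → ⋯ → E^{kn} → X^{kn+1} → 0 be an exact sequence in 𝓔 with X⁰, X^{kn+1} ∈ M (the middle terms arbitrary). Then ξ is Yoneda equivalent to a splice of k n-exact sequences in M: there exist objects Z₀ = X⁰, Z₁, …, Z_{k−1}, Z_k = X^{kn+1} in M and n-exact sequences ξ_j : 0 → Z_{j−1} → X^{(j−1)n+1} → ⋯ → X^{jn} → Z_j → 0 in M (1 ≤ j ≤ k) such that the Yoneda composite [ξ_k]∘[ξ_{k−1}]∘⋯∘[ξ₁] ∈ Ext^{kn}(X^{kn+1},X⁰) equals [ξ].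 -/
open CategoryTheory CategoryTheory.Abelian CategoryTheory.Limits

universe w v u

namespace NZPaper

/-- Cast of an `Ext`-class along an equality of degrees. -/
noncomputable def extCast {C : Type u} [Category.{v} C] [Abelian C] [HasExt.{w} C]
    {X Z : C} {a b : ℕ} (e : Ext X Z a) (h : a = b) : Ext X Z b := h ▸ e

/-- The Yoneda composite `c (k-1) ∘ ⋯ ∘ c 0 ∈ Ext^{kn}(Z k, Z 0)` of a chain of classes
`c j ∈ Extⁿ(Z (j+1), Z j)`. -/
noncomputable def chainCompose {C : Type u} [Category.{v} C] [Abelian C] [HasExt.{w} C]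
    (n : ℕ) (Z : ℕ → C) (c : ∀ j, Ext (Z (j + 1)) (Z j) n) :
    ∀ k : ℕ, Ext (Z k) (Z 0) (k * n)
  | 0 => extCast (Ext.mk₀ (𝟙 (Z 0))) (by omega)
  | (k + 1) => (c k).comp (chainCompose n Z c k) (show n + k * n = (k + 1) * n by ring)


/-!
Let `M` be `n`-cluster tilting. Call `e ∈ Ext^r(B, K)` left cancellable if `x ∘ e = 0` forces
`x = 0` for all `x ∈ Ext^i(K, X)` with `X ∈ M`, `i ≥ 1` and `r + i ≤ n`. If `B ∈ M`, a left
cancellable class of degree `1` has a middle term without `Ext^i` into `M` for `0 < i < n`, hence in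
`M`. In degree `r > 1`, the representative of `e` obtained by replacing its first middle term by a
left `M`-approximation exhibits `e` as `δ ∘ e'`, where `δ ∈ Ext¹` has middle term in `M` and `e'`
is again left cancellable. So left cancellable classes are represented by extensions with middle
terms in `M`, and in degree `n` every class is left cancellable because no `i` is left to check.

For a class of degree `q + n` with `n ∣ q` into an object of `M`, choose an epimorphism from an
object of `M` killing the class, and continue with right `M`-approximations of the successive
kernels. They kill the remaining classes since `M` has no `Ext^i` for `q < i < q + n`, and after `n`
steps the kernel has no `Ext^i` from `M` for `0 < i < n`, hence lies in `M`. This splits off a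
factor of degree `n` between objects of `M`.
-/

section Effaceability

variable {C : Type u} [Category.{v} C] [Abelian C]

open HomologicalComplex in
lemma epi_f_of_quasiIsoAt_single {ι : Type*} [DecidableEq ι] {c : ComplexShape ι} {j : ι}
    {K : HomologicalComplex C c} {B : C} (π : K ⟶ (single C c j).obj B) [QuasiIsoAt π j] :
    Epi (π.f j) := by
  have hcycles : cyclesMap π j ≫ (singleObjCyclesSelfIso c j B).hom =
      K.homologyπ j ≫ homologyMap π j ≫ (singleObjHomologySelfIso c j B).hom := by
    rw [homologyπ_naturality_assoc, homologyπ_singleObjHomologySelfIso_hom]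
  have : Epi (cyclesMap π j ≫ (singleObjCyclesSelfIso c j B).hom) := by
    rw [hcycles]; infer_instance
  have : Epi (K.iCycles j ≫ π.f j ≫ (singleObjXSelf c j B).hom) := by
    rwa [← cyclesMap_i_assoc, ← singleObjCyclesSelfIso_hom]
  have : Epi (π.f j ≫ (singleObjXSelf c j B).hom) := epi_of_epi (K.iCycles j) _
  exact (epi_comp_iff_of_isIso (π.f j) (singleObjXSelf c j B).hom).1 this

open HomologicalComplex in
lemma exists_epi_lift_single {i : ℤ} {K : CochainComplex C ℤ} [K.IsStrictlyLE i] {B : C}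
    (π : K ⟶ (single C (ComplexShape.up ℤ) i).obj B) [QuasiIsoAt π i] :
    ∃ (E : C) (p : E ⟶ B) (s : (single C (ComplexShape.up ℤ) i).obj E ⟶ K),
      Epi p ∧ s ≫ π = (single C (ComplexShape.up ℤ) i).map p := by
  have := epi_f_of_quasiIsoAt_single π
  refine ⟨K.X i, π.f i ≫ (singleObjXSelf _ i B).hom, mkHomFromSingle (𝟙 _) ?_,
    epi_comp _ _, from_single_hom_ext ?_⟩
  · rintro _ rfl
    exact (K.isZero_of_isStrictlyLE i (i + 1) (by simp)).eq_of_tgt _ _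
  · simp [single_map_f_self]

open DerivedCategory

lemma exists_epi_Q_map_comp_eq_zero [HasDerivedCategory.{w} C] {B : C} {i n : ℤ} (hn : n < i)
    {L : CochainComplex C ℤ} [L.IsStrictlyLE n]
    (φ : Q.obj ((CochainComplex.singleFunctor C i).obj B) ⟶ Q.obj L) :
    ∃ (E : C) (p : E ⟶ B),
      Epi p ∧ Q.map ((CochainComplex.singleFunctor C i).map p) ≫ φ = 0 := by
  obtain ⟨K, _, π, hπ, g, rfl⟩ := right_fac_of_isStrictlyLE φ i
  rw [isIso_Q_map_iff_quasiIso] at hπ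
  have : QuasiIsoAt (L := (HomologicalComplex.single C (.up ℤ) i).obj B) π i := hπ.quasiIsoAt i
  obtain ⟨E, p, (s : (CochainComplex.singleFunctor C i).obj E ⟶ K), hp,
    (hs : s ≫ π = (CochainComplex.singleFunctor C i).map p)⟩ := exists_epi_lift_single (B := B) π
  have hsg : s ≫ g = 0 :=
    HomologicalComplex.from_single_hom_ext ((L.isZero_of_isStrictlyLE n i hn).eq_of_tgt _ _)
  refine ⟨E, p, hp, ?_⟩
  rw [← hs, Q.map_comp, Category.assoc, IsIso.hom_inv_id_assoc, ← Q.map_comp, hsg, Q.map_zero]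

lemma exists_epi_mk₀_comp_eq_zero [HasExt.{w} C] {B A : C} {m : ℕ} (e : Ext B A (m + 1)) :
    ∃ (E : C) (p : E ⟶ B), Epi p ∧ (Ext.mk₀ p).comp e (zero_add _) = 0 := by
  let := HasDerivedCategory.standard C
  let shift := ((singleFunctors C).shiftIso (m + 1) (-(m + 1)) 0 (by lia)).app A
  obtain ⟨E, p, hp, h⟩ := exists_epi_Q_map_comp_eq_zero (i := 0) (n := -(m + 1)) (by lia)
    (L := (CochainComplex.singleFunctor C (-(m + 1))).obj A) (e.hom ≫ shift.hom)
  refine ⟨E, p, hp, Ext.homEquiv.injective ((cancel_mono shift.hom).1 ?_)⟩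
  have hcomp : ((Ext.mk₀ p).comp e (zero_add _)).hom = (singleFunctor C 0).map p ≫ e.hom := by
    simp [ShiftedHom.mk₀_comp]
  change ((Ext.mk₀ p).comp e (zero_add _)).hom ≫ _ = (0 : Ext E A (m+1)).hom ≫ _
  rw [hcomp, Ext.zero_hom, zero_comp, Category.assoc]
  exact h

lemma shortExact_kernel {E B : C} (p : E ⟶ B) [Epi p] :
    (ShortComplex.mk (kernel.ι p) p (kernel.condition p)).ShortExact where
  exact := ShortComplex.exact_kernel p

lemma shortExact_cokernel {A E : C} (i : A ⟶ E) [Mono i] :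
    (ShortComplex.mk i (cokernel.π i) (cokernel.condition i)).ShortExact where
  exact := ShortComplex.exact_cokernel i

lemma shortExact_eqToHom_of_isZero {A E B : C} (h : A = E) (hB : IsZero B) (g : E ⟶ B) :
    (ShortComplex.mk (eqToHom h) g (hB.eq_of_tgt _ _)).ShortExact where
  exact := (ShortComplex.exact_iff_epi _ (hB.eq_of_tgt _ _)).2 (by dsimp; infer_instance)
  epi_g := ⟨fun _ _ _ => hB.eq_of_src _ _⟩

lemma shortExact_of_isPushout {S : ShortComplex C} (hS : S.ShortExact) {A P : C} {a : S.X₁ ⟶ A}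
    {l : S.X₂ ⟶ P} {r : A ⟶ P} (sq : IsPushout S.f a l r) {g : P ⟶ S.X₃} (hl : l ≫ g = S.g)
    (hr : r ≫ g = 0) : (ShortComplex.mk r g hr).ShortExact := by
  have : Mono S.f := hS.mono_f
  have : Epi S.g := hS.epi_g
  have : Epi (l ≫ g) := by rwa [hl]
  have hmono : Mono r := (MorphismProperty.monomorphisms C).of_isPushout sq.flip
    (MorphismProperty.monomorphisms.infer_property S.f)
  have hepi : Epi g := epi_of_epi l g
  refine .mk' (ShortComplex.exact_of_g_is_cokernel _
    (CokernelCofork.IsColimit.ofπ' _ _ fun {Z} k hk => ?_)) hmono hepi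
  have hlk : S.f ≫ l ≫ k = 0 := by rw [sq.w_assoc, hk, comp_zero]
  refine ⟨hS.exact.desc (l ≫ k) hlk, sq.hom_ext ?_ ?_⟩
  · simp [reassoc_of% hl]
  · simp [reassoc_of% hr, hk]

variable [HasExt.{w} C]

lemma exists_shortExact_extClass_eq {B A : C} (e : Ext B A 1) :
    ∃ (E : C) (f : A ⟶ E) (g : E ⟶ B) (z : f ≫ g = 0)
      (hS : (ShortComplex.mk f g z).ShortExact), hS.extClass = e := by
  obtain ⟨E, p, _, he⟩ := exists_epi_mk₀_comp_eq_zero e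
  have hp := shortExact_kernel p
  obtain ⟨x, hx⟩ := Ext.contravariant_sequence_exact₃ hp A e he (add_zero 1)
  obtain ⟨a, rfl⟩ := (Ext.mk₀_bijective _ _).2 x
  have sq := IsPushout.of_hasPushout (kernel.ι p) a
  let g := sq.desc p 0 (by simp)
  have hl : pushout.inl _ _ ≫ g = p := sq.inl_desc ..
  have hr : pushout.inr _ _ ≫ g = 0 := sq.inr_desc ..
  have hT := shortExact_of_isPushout hp sq hl hr
  refine ⟨_, _, g, hr, hT, ?_⟩
  have hnat := ShortComplex.ShortExact.extClass_naturality hp hT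
    { τ₁ := a, τ₂ := pushout.inl _ _, τ₃ := 𝟙 B, comm₁₂ := sq.w.symm, comm₂₃ := by simp [hl] }
  rw [← hx, hnat, Ext.mk₀_id_comp]

end Effaceability
section YonedaComposites

variable {C : Type u} [Category.{v} C] [Abelian C] [HasExt.{w} C]

section Transport

variable {X X' X'' Y Y' Z Z' Z'' : C} {a b c a' b' c' : ℕ}

@[simp]
lemma extTransport_self (e : Ext.{w} X Z a) (hX : X = X) (hZ : Z = Z) :
    extTransport e hX hZ = e := by
  simp [extTransport]

lemma extTransport_extTransport (e : Ext.{w} X Z a) (hX : X = X') (hX' : X' = X'') (hZ : Z = Z')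
    (hZ' : Z' = Z'') :
    extTransport (extTransport e hX hZ) hX' hZ' = extTransport e (hX.trans hX') (hZ.trans hZ') := by
  subst hX hX' hZ hZ'
  simp

lemma comp_extCast (x : Ext.{w} X Y a) (y : Ext.{w} Y Z b) (hb : b = b') (h : a + b' = c) :
    x.comp (extCast y hb) h = x.comp y (by rwa [hb]) := by
  subst hb; rfl

lemma extCast_comp (x : Ext.{w} X Y a) (y : Ext.{w} Y Z b) (ha : a = a') (h : a' + b = c) :
    (extCast x ha).comp y h = x.comp y (by rwa [ha]) := by
  subst ha; rfl

lemma extCast_comp_eq (x : Ext.{w} X Y a) (y : Ext.{w} Y Z b) (h : a + b = c) (hc : c = c') :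
    extCast (x.comp y h) hc = x.comp y (h.trans hc) := by
  subst hc; rfl

lemma extCast_extCast (x : Ext.{w} X Y a) (h : a = b) (h' : b = c) :
    extCast (extCast x h) h' = extCast x (h.trans h') := by
  subst h h'; rfl

lemma comp_mk₀_id_eq_extCast (x : Ext.{w} X Y a) (h : a + 0 = b) :
    x.comp (Ext.mk₀ (𝟙 Y)) h = extCast x h := by
  subst h; exact x.comp_mk₀_id

lemma mk₀_id_comp_eq_extCast (x : Ext.{w} X Y a) (h : 0 + a = b) :
    (Ext.mk₀ (𝟙 X)).comp x h = extCast x (by rwa [zero_add] at h) := by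
  obtain rfl : a = b := by rwa [zero_add] at h
  exact x.mk₀_id_comp

end Transport

lemma chainCompose_succ' {n : ℕ} (Z : ℕ → C) (c : ∀ j, Ext.{w} (Z (j + 1)) (Z j) n) (k : ℕ) :
    chainCompose n Z c (k + 1) =
      (chainCompose n (fun j => Z (j + 1)) (fun j => c (j + 1)) k).comp (c 0)
        (Nat.succ_mul k n).symm := by
  induction k with
  | zero => rw [chainCompose, chainCompose, chainCompose, comp_extCast, extCast_comp,
      comp_mk₀_id_eq_extCast, mk₀_id_comp_eq_extCast]
  | succ k ih => rw [chainCompose, ih, chainCompose, Ext.comp_assoc _ _ _ _ _ (by lia)]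

/-- `IsYonedaComposite P k e` says that `e` is a Yoneda composite `c (k-1) ∘ ⋯ ∘ c 0`, in the order
of `chainCompose`, of `k` classes of degree `n` satisfying `P`. The empty composites are the
identity classes. -/
inductive IsYonedaComposite {n : ℕ} (P : ∀ ⦃B A : C⦄, Ext.{w} B A n → Prop) :
    ℕ → ∀ {B A : C} {d : ℕ}, Ext.{w} B A d → Prop
  | nil (B : C) : IsYonedaComposite P 0 (Ext.mk₀ (𝟙 B))
  | cons {k : ℕ} {B D A : C} {d d' : ℕ} {e : Ext.{w} B D d} {c : Ext.{w} D A n}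
      (he : IsYonedaComposite P k e) (hc : P c) (h : d + n = d') :
      IsYonedaComposite P (k + 1) (e.comp c h)

namespace IsYonedaComposite

variable {n : ℕ} {P : ∀ ⦃B A : C⦄, Ext.{w} B A n → Prop}

lemma single {B A : C} {c : Ext.{w} B A n} (hc : P c) : IsYonedaComposite P 1 c := by
  simpa using cons (nil B) hc (zero_add n)

lemma comp {k l : ℕ} {B D A : C} {d d' d'' : ℕ} {e : Ext.{w} B D d} {e' : Ext.{w} D A d'}
    (he : IsYonedaComposite P k e) (he' : IsYonedaComposite P l e') (h : d + d' = d'') :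
    IsYonedaComposite P (k + l) (e.comp e' h) := by
  induction he' generalizing d'' with
  | nil D =>
    obtain rfl : d = d'' := h
    simpa using he
  | cons _ hc h' ih =>
    rw [← Ext.comp_assoc _ _ _ rfl _ (by lia)]
    exact (ih he rfl).cons hc _

open scoped ZeroObject in
lemma exists_chainCompose_eq {k : ℕ} {B A : C} {d : ℕ} {e : Ext.{w} B A d}
    (he : IsYonedaComposite P k e) :
    ∃ (Z : ℕ → C) (c : ∀ j, Ext.{w} (Z (j + 1)) (Z j) n),
      (∀ j < k, P (c j)) ∧ (∀ j ≥ k, IsZero (Z (j + 1))) ∧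
      ∃ (z0 : Z 0 = A) (zk : Z k = B) (hd : k * n = d),
        extCast (extTransport (chainCompose n Z c k) zk z0) hd = e := by
  induction he with
  | nil B =>
    refine ⟨fun j => match j with | 0 => B | _ + 1 => 0, fun _ => 0, by simp,
      fun _ _ => isZero_zero C, rfl, rfl, zero_mul n, ?_⟩
    rw [extTransport_self, chainCompose, extCast_extCast]
    rfl
  | @cons k B D A d d' e c₀ he hc₀ h ih =>
    obtain ⟨Z, c, hc, hZ, rfl, rfl, rfl, rfl⟩ := ih
    refine ⟨fun j => match j with | 0 => A | j + 1 => Z j,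
      fun j => match j with | 0 => c₀ | j + 1 => c j, ?_, ?_, rfl, rfl, by rw [← h]; ring, ?_⟩
    · rintro (_ | j) hj
      · exact hc₀
      · exact hc j (by lia)
    · rintro (_ | j) hj
      · lia
      · exact hZ j (by lia)
    · rw [chainCompose_succ', extTransport_self, extTransport_self, extCast_comp, extCast_comp_eq]

end IsYonedaComposite

namespace ExactExtension

variable {m : ℕ} {Z E : ℕ → C} {f : ∀ j, Z j ⟶ E j} {g : ∀ j, E j ⟶ Z (j + 1)}
  {z : ∀ j, f j ≫ g j = 0}

/-- The splice of short exact sequences `0 → Z j → E j → Z (j + 1) → 0`. The one with index `m`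
plays the role of `0 → K m → Y (m + 1) → K (m + 1) → 0` in `ExactExtension`, where the first map is
an identity. -/
def ofShortExact (hS : ∀ j, (ShortComplex.mk (f j) (g j) (z j)).ShortExact) (hm : Z m = E m)
    (hf : f m = eqToHom hm) : ExactExtension C m :=
  let Y : ℕ → C := fun i => match i with | 0 => Z 0 | i + 1 => E i
  let π : ∀ i, Y i ⟶ Z i := fun i => match i with | 0 => 𝟙 (Z 0) | i + 1 => g i
  { Y := Y
    K := Z
    ι := f
    π := π
    d := fun i => π i ≫ f i
    hK0 := rfl
    hKm := hm
    zero := z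
    shortExact := hS
    d0_eq := (Category.id_comp _).trans (Category.id_comp _)
    dmid_eq := fun _ _ _ => rfl
    dlast_eq := by rw [hf] }

lemma chainClass_ofShortExact (hS : ∀ j, (ShortComplex.mk (f j) (g j) (z j)).ShortExact)
    (hm : Z m = E m) (hf : f m = eqToHom hm) {c : ∀ j, Ext.{w} (Z (j + 1)) (Z j) 1} {j : ℕ}
    (hc : ∀ i < j, (hS i).extClass = c i) :
    (ofShortExact hS hm hf).chainClass j = extCast (chainCompose 1 Z c j) (mul_one j) := by
  induction j with
  | zero => rfl
  | succ j ih =>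
    refine (congrArg (fun x : Ext.{w} (Z j) (Z 0) j => (hS j).extClass.comp x (add_comm 1 j))
      (ih fun i hi => hc i (by lia))).trans ?_
    rw [hc j j.lt_succ_self, comp_extCast, chainCompose, extCast_comp_eq]

lemma extTransport_extClass (T : ExactExtension C m) {B A : C} (e1 : T.Y (m + 1) = B)
    (e0 : T.Y 0 = A) :
    extTransport T.extClass e1 e0 =
      extTransport (T.chainClass m) (T.hKm.trans e1) (T.hK0.trans e0) :=
  extTransport_extTransport _ T.hKm e1 T.hK0 e0

end ExactExtension

/-- The classes in `Ext¹` of the short exact sequences with middle term in `M`. -/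
def HasMiddleTermIn (M : Set C) ⦃B A : C⦄ (e : Ext.{w} B A 1) : Prop :=
  ∃ (E : C) (f : A ⟶ E) (g : E ⟶ B) (z : f ≫ g = 0)
    (hS : (ShortComplex.mk f g z).ShortExact), E ∈ M ∧ hS.extClass = e

/-- The classes of the `m`-fold extensions with all middle terms in `M`; their end terms and
images are arbitrary. -/
abbrev IsSpliceIn (M : Set C) {B A : C} {m : ℕ} (e : Ext.{w} B A m) : Prop :=
  IsYonedaComposite (HasMiddleTermIn M) m e

lemma HasMiddleTermIn.isSpliceIn {M : Set C} {B A : C} {e : Ext.{w} B A 1}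
    (he : HasMiddleTermIn M e) : IsSpliceIn M e :=
  .single he

lemma IsSpliceIn.comp {M : Set C} {B D A : C} {l m d : ℕ} {e : Ext.{w} B D l} {e' : Ext.{w} D A m}
    (he : IsSpliceIn M e) (he' : IsSpliceIn M e') (h : l + m = d) :
    IsSpliceIn M (e.comp e' h) := by
  subst h
  exact IsYonedaComposite.comp he he' rfl

/-- The classes of the `n`-exact sequences in `M`. -/
def IsNExactClass (M : Set C) {n : ℕ} ⦃B A : C⦄ (e : Ext.{w} B A n) : Prop :=
  ∃ (T : ExactExtension C n) (e0 : T.Y 0 = A) (e1 : T.Y (n + 1) = B),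
    (∀ i ≤ n + 1, T.Y i ∈ M) ∧ extTransport T.extClass e1 e0 = e

lemma IsSpliceIn.isNExactClass {M : Set C} {m : ℕ} {B A : C} {e : Ext.{w} B A m}
    (he : IsSpliceIn M e) (hA : A ∈ M) (hB : B ∈ M) : IsNExactClass M e := by
  obtain ⟨Z, c, hc, hZ, rfl, rfl, hd, rfl⟩ := he.exists_chainCompose_eq
  have hses : ∀ j, ∃ (E : C) (f : Z j ⟶ E) (g : E ⟶ Z (j + 1)) (z : f ≫ g = 0)
      (hS : (ShortComplex.mk f g z).ShortExact), (j < m → E ∈ M ∧ hS.extClass = c j) ∧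
        (m ≤ j → ∃ h : Z j = E, f = eqToHom h) := fun j => by
    rcases lt_or_ge j m with hj | hj
    · obtain ⟨E, f, g, z, hS, h⟩ := hc j hj
      exact ⟨E, f, g, z, hS, fun _ => h, fun h => by lia⟩
    · exact ⟨Z j, eqToHom rfl, 0, comp_zero, shortExact_eqToHom_of_isZero rfl (hZ j hj) 0,
        fun h => by lia, fun _ => ⟨rfl, rfl⟩⟩
  choose E f g z hS hlt hge using hses
  obtain ⟨hm, hf⟩ := hge m le_rfl
  let T := ExactExtension.ofShortExact hS hm hf
  have hY : ∀ i ≤ m + 1, T.Y i ∈ M := by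
    rintro (_ | i) hi
    · exact hA
    · rcases (Nat.le_of_succ_le_succ hi).lt_or_eq with hi | rfl
      · exact (hlt i hi).1
      · exact hm.subst (motive := (· ∈ M)) hB
  refine ⟨T, rfl, hm.symm, hY, ?_⟩
  refine (T.extTransport_extClass _ _).trans ((extTransport_self ..).trans ?_)
  rw [extTransport_self]
  exact ExactExtension.chainClass_ofShortExact hS hm hf fun i hi => (hlt i hi).2

end YonedaComposites
section ClusterTilting

variable {C : Type u} [Category.{v} C] [Abelian C] [HasExt.{w} C] {n : ℕ} {M : Set C}

/-- Left multiplication by `e` is injective on positive-degree classes with values in `M`, as long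
as the total degree is at most `n`. If `M` is `n`-cluster tilting, `B ∈ M` and `1 ≤ r ≤ n`, these
are exactly the classes represented by an extension with all middle terms in `M`. -/
def IsLeftCancellable (n : ℕ) (M : Set C) {B K : C} {r : ℕ} (e : Ext.{w} B K r) : Prop :=
  ∀ X ∈ M, ∀ (i q : ℕ), 1 ≤ i → q ≤ n → ∀ (h : r + i = q) (x : Ext.{w} K X i),
    e.comp x h = 0 → x = 0

lemma isLeftCancellable_of_le {B K : C} {r : ℕ} (e : Ext.{w} B K r) (hr : n ≤ r) :
    IsLeftCancellable n M e :=
  fun _ _ i q hi hq h => by lia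

namespace IsNClusterTilting

lemma ext_eq_zero (hM : IsNClusterTilting.{w} n M) {X Y : C} (hX : X ∈ M) (hY : Y ∈ M) {i : ℕ}
    (hi : 1 ≤ i) (hin : i < n) (e : Ext.{w} X Y i) : e = 0 :=
  (hM.2.2.2.1 X).1 hX Y hY i hi hin e

lemma exists_left_approximation (hM : IsNClusterTilting.{w} n M) (E : C) :
    ∃ (N : C) (a : E ⟶ N), N ∈ M ∧ Mono a ∧ ∀ X ∈ M, ∀ f : E ⟶ X, ∃ h : N ⟶ X, a ≫ h = f :=
  hM.2.1 E

lemma exists_right_approximation (hM : IsNClusterTilting.{w} n M) (E : C) :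
    ∃ (N : C) (p : N ⟶ E), N ∈ M ∧ Epi p ∧ ∀ X ∈ M, ∀ f : X ⟶ E, ∃ h : X ⟶ N, h ≫ p = f :=
  hM.2.2.1 E

lemma mem_of_ext_from_eq_zero (hM : IsNClusterTilting.{w} n M) {E : C}
    (h : ∀ X ∈ M, ∀ i : ℕ, 1 ≤ i → i < n → ∀ e : Ext.{w} E X i, e = 0) : E ∈ M :=
  (hM.2.2.2.1 E).2 h

lemma mem_of_ext_to_eq_zero (hM : IsNClusterTilting.{w} n M) {E : C}
    (h : ∀ X ∈ M, ∀ i : ℕ, 1 ≤ i → i < n → ∀ e : Ext.{w} X E i, e = 0) : E ∈ M :=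
  (hM.2.2.2.2 E).2 h

lemma exists_hasMiddleTermIn_comp_eq (hM : IsNClusterTilting.{w} n M) {B A : C} {m : ℕ}
    (e : Ext.{w} B A (m + 1)) :
    ∃ (L : C) (δ : Ext.{w} B L 1) (e' : Ext.{w} L A m),
      HasMiddleTermIn M δ ∧ δ.comp e' (add_comm 1 m) = e := by
  obtain ⟨E, p, _, hp⟩ := exists_epi_mk₀_comp_eq_zero e
  obtain ⟨N, q, hN, _, -⟩ := hM.exists_right_approximation E
  have hqp : (Ext.mk₀ (q ≫ p)).comp e (zero_add _) = 0 := by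
    rw [← Ext.mk₀_comp_mk₀_assoc, hp, Ext.comp_zero]
  have hS := shortExact_kernel (q ≫ p)
  obtain ⟨e', he'⟩ := Ext.contravariant_sequence_exact₃ hS A e hqp (add_comm 1 m)
  exact ⟨_, hS.extClass, e', ⟨_, _, _, _, hS, hN, rfl⟩, he'⟩

lemma exists_isSpliceIn_comp_eq (hM : IsNClusterTilting.{w} n M) {B K : C} {r : ℕ}
    (e : Ext.{w} B K (r + 1)) :
    ∃ (L : C) (c : Ext.{w} B L r) (e' : Ext.{w} L K 1), IsSpliceIn M c ∧ c.comp e' rfl = e := by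
  induction r generalizing B with
  | zero => exact ⟨B, Ext.mk₀ (𝟙 B), e, .nil B, e.mk₀_id_comp⟩
  | succ r ih =>
    obtain ⟨D, δ, e₁, hδ, rfl⟩ := hM.exists_hasMiddleTermIn_comp_eq e
    obtain ⟨L, c, e', hc, rfl⟩ := ih e₁
    exact ⟨L, δ.comp c (add_comm 1 r), e', hδ.isSpliceIn.comp hc _,
      Ext.comp_assoc _ _ _ _ _ (by lia)⟩

lemma isLeftCancellable_of_isYonedaComposite (hM : IsNClusterTilting.{w} n M) {B K : C} {k r : ℕ}
    {e : Ext.{w} B K r} (he : IsYonedaComposite (HasMiddleTermIn M) k e) :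
    IsLeftCancellable n M e := by
  induction he with
  | nil B =>
    intro X _ i q _ _ h x hx
    obtain rfl : i = q := by lia
    simpa using hx
  | cons _ hδ h ih =>
    obtain ⟨E, f, g, z, hS, hE, rfl⟩ := hδ
    intro X hX i q hi hq h' x hx
    rw [Ext.comp_assoc _ _ _ h rfl (by lia)] at hx
    have hδx := ih X hX (1 + i) q (by lia) hq (by lia) _ hx
    obtain ⟨y, rfl⟩ := Ext.contravariant_sequence_exact₁ hS X x rfl hδx
    rw [hM.ext_eq_zero hE hX hi (by lia) y, Ext.comp_zero]

lemma exists_mono_comp_mk₀_eq_zero (hM : IsNClusterTilting.{w} n M) {B K : C} {r : ℕ}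
    (hr : r + 1 ≤ n) (e : Ext.{w} B K (r + 1)) :
    ∃ (N : C) (a : K ⟶ N), N ∈ M ∧ Mono a ∧ e.comp (Ext.mk₀ a) (add_zero _) = 0 ∧
      ∀ X ∈ M, ∀ f : K ⟶ X, e.comp (Ext.mk₀ f) (add_zero _) = 0 → ∃ h : N ⟶ X, a ≫ h = f := by
  obtain ⟨L, c, e', hc, rfl⟩ := hM.exists_isSpliceIn_comp_eq e
  obtain ⟨E, i, g, z, hS, rfl⟩ := exists_shortExact_extClass_eq e'
  obtain ⟨N, p, hN, _, hp⟩ := hM.exists_left_approximation E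
  have : Mono i := hS.mono_f
  refine ⟨N, i ≫ p, hN, mono_comp _ _, ?_, fun X hX f hf => ?_⟩
  · have hi : hS.extClass.comp (Ext.mk₀ i) (add_zero 1) = 0 := hS.extClass_comp
    rw [← Ext.mk₀_comp_mk₀, ← Ext.comp_assoc_of_third_deg_zero, Ext.comp_assoc_of_third_deg_zero c,
      hi, Ext.comp_zero, Ext.zero_comp]
  · rw [Ext.comp_assoc_of_third_deg_zero] at hf
    have hδf := hM.isLeftCancellable_of_isYonedaComposite hc X hX 1 _ le_rfl hr rfl _ hf
    obtain ⟨y, hy⟩ := Ext.contravariant_sequence_exact₁ hS X (Ext.mk₀ f) rfl hδf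
    obtain ⟨v, rfl⟩ := (Ext.mk₀_bijective _ _).2 y
    obtain ⟨h, rfl⟩ := hp X hX v
    rw [Ext.mk₀_comp_mk₀] at hy
    exact ⟨h, (Category.assoc _ _ _).trans ((Ext.mk₀_bijective _ _).1 hy)⟩

lemma isLeftCancellable_of_comp_extClass (hM : IsNClusterTilting.{w} n M) {S : ShortComplex C}
    (hS : S.ShortExact) (hN : S.X₂ ∈ M) {B : C} {r : ℕ} {e : Ext.{w} B S.X₃ (r + 1)}
    (he : IsLeftCancellable n M (e.comp hS.extClass rfl))
    (hfac : ∀ X ∈ M, ∀ f : S.X₁ ⟶ X,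
      (e.comp hS.extClass rfl).comp (Ext.mk₀ f) (add_zero _) = 0 → ∃ h, S.f ≫ h = f) :
    IsLeftCancellable n M e := by
  intro X hX i q hi hq h y hy
  obtain ⟨i, rfl⟩ := Nat.exists_eq_add_of_le hi
  have hgy := hM.ext_eq_zero hN hX hi (by lia) ((Ext.mk₀ S.g).comp y (zero_add _))
  obtain ⟨y, rfl⟩ := Ext.contravariant_sequence_exact₃ hS X y hgy rfl
  rw [← Ext.comp_assoc _ _ _ rfl _ (by lia)] at hy
  rcases i.eq_zero_or_pos with rfl | hi
  · obtain ⟨f, rfl⟩ := (Ext.mk₀_bijective _ _).2 y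
    obtain rfl : r + 1 + 1 = q := h
    obtain ⟨b, rfl⟩ := hfac X hX f hy
    rw [← Ext.mk₀_comp_mk₀]
    exact hS.extClass_comp_assoc _
  · rw [he X hX i q hi hq _ y hy, Ext.comp_zero]

lemma hasMiddleTermIn_of_isLeftCancellable (hM : IsNClusterTilting.{w} n M) {B K : C}
    (hB : B ∈ M) {e : Ext.{w} B K 1} (he : IsLeftCancellable n M e) : HasMiddleTermIn M e := by
  obtain ⟨E, f, g, z, hS, rfl⟩ := exists_shortExact_extClass_eq e
  refine ⟨E, f, g, z, hS, hM.mem_of_ext_from_eq_zero fun X hX i hi hin y => ?_, rfl⟩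
  have hfy : (Ext.mk₀ f).comp y (zero_add i) = 0 :=
    he X hX i (1 + i) hi (by lia) rfl _ (hS.extClass_comp_assoc y)
  obtain ⟨x, rfl⟩ := Ext.contravariant_sequence_exact₂ hS X y hfy
  rw [hM.ext_eq_zero hB hX hi hin x, Ext.comp_zero]

lemma isSpliceIn_of_isLeftCancellable (hM : IsNClusterTilting.{w} n M) {B K : C} (hB : B ∈ M)
    {r : ℕ} (hr : r + 1 ≤ n) {e : Ext.{w} B K (r + 1)} (he : IsLeftCancellable n M e) :
    IsSpliceIn M e := by
  induction r generalizing K with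
  | zero => exact (hM.hasMiddleTermIn_of_isLeftCancellable hB he).isSpliceIn
  | succ r ih =>
    obtain ⟨N, a, hN, _, hea, hfac⟩ := hM.exists_mono_comp_mk₀_eq_zero hr e
    have hS := shortExact_cokernel a
    obtain ⟨e', rfl⟩ := Ext.covariant_sequence_exact₁ B hS e hea rfl
    have he' := ih (by lia) (hM.isLeftCancellable_of_comp_extClass hS hN he hfac)
    exact he'.comp (HasMiddleTermIn.isSpliceIn ⟨_, _, _, _, hS, hN, rfl⟩) rfl

lemma isSpliceIn (hM : IsNClusterTilting.{w} n M) (hn : 1 ≤ n) {B A : C} (hB : B ∈ M)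
    (e : Ext.{w} B A n) : IsSpliceIn M e := by
  obtain ⟨r, rfl⟩ := Nat.exists_eq_add_of_le' hn
  exact hM.isSpliceIn_of_isLeftCancellable hB le_rfl (isLeftCancellable_of_le e le_rfl)

lemma ext_kernel_eq_zero (hM : IsNClusterTilting.{w} n M) {L N : C} (hN : N ∈ M) (p : N ⟶ L)
    [Epi p] {X : C} (hX : X ∈ M) (hp : ∀ f : X ⟶ L, ∃ h : X ⟶ N, h ≫ p = f) {j : ℕ}
    (hL : ∀ i, 1 ≤ i → i ≤ j → ∀ x : Ext.{w} X L i, x = 0) {i : ℕ} (hi : 1 ≤ i) (hij : i ≤ j + 1)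
    (hin : i < n) (x : Ext.{w} X (kernel p) i) : x = 0 := by
  have hS := shortExact_kernel p
  obtain ⟨i, rfl⟩ := Nat.exists_eq_add_of_le' hi
  have hx := hM.ext_eq_zero hX hN hi hin (x.comp (Ext.mk₀ (kernel.ι p)) (add_zero _))
  obtain ⟨y, rfl⟩ := Ext.covariant_sequence_exact₁ X hS x hx rfl
  rcases i.eq_zero_or_pos with rfl | hi
  · obtain ⟨f, rfl⟩ := (Ext.mk₀_bijective _ _).2 y
    obtain ⟨h, rfl⟩ := hp f
    have hpδ : (Ext.mk₀ p).comp hS.extClass (zero_add 1) = 0 := hS.comp_extClass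
    rw [← Ext.mk₀_comp_mk₀, Ext.comp_assoc_of_second_deg_zero, hpδ, Ext.comp_zero]
  · rw [hL i hi (by lia) y, Ext.zero_comp]

lemma exists_isSpliceIn_comp_eq_of_ext_eq_zero (hM : IsNClusterTilting.{w} n M) {K A : C}
    {j r d : ℕ} (hj : j < n) (hd : j + r = d) (e : Ext.{w} K A d)
    (hA : ∀ N ∈ M, ∀ i, r < i → i ≤ d → ∀ x : Ext.{w} N A i, x = 0) :
    ∃ (L : C) (c : Ext.{w} K L j) (e' : Ext.{w} L A r), IsSpliceIn M c ∧ c.comp e' hd = e ∧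
      ∀ X ∈ M, ∀ i, 1 ≤ i → i ≤ j → ∀ x : Ext.{w} X L i, x = 0 := by
  induction j generalizing r with
  | zero =>
    obtain rfl : r = d := by lia
    exact ⟨K, Ext.mk₀ (𝟙 K), e, .nil K, e.mk₀_id_comp, fun _ _ _ _ _ => by lia⟩
  | succ j ih =>
    obtain ⟨L, c, e₁, hc, rfl, hL⟩ := ih (r := r + 1) (by lia) (by lia)
      fun N hN i hi => hA N hN i (by lia)
    obtain ⟨N, p, hN, _, hp⟩ := hM.exists_right_approximation L
    have hS := shortExact_kernel p
    obtain ⟨e', rfl⟩ := Ext.contravariant_sequence_exact₃ hS A e₁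
      (hA N hN (r + 1) (by lia) (by lia) _) (add_comm 1 r)
    exact ⟨kernel p, c.comp hS.extClass rfl, e',
      hc.comp (HasMiddleTermIn.isSpliceIn ⟨_, _, _, _, hS, hN, rfl⟩) rfl,
      Ext.comp_assoc _ _ _ _ _ (by lia), fun X hX i hi hij x =>
        hM.ext_kernel_eq_zero hN p hX (hp X hX) (hL X hX) hi hij (by lia) x⟩

end IsNClusterTilting

namespace IsNZClusterTilting

lemma exists_mem_isSpliceIn_comp_eq (hM : IsNZClusterTilting.{w} n M) (hn : 1 ≤ n) {B A : C}
    (hA : A ∈ M) {q d : ℕ} (hq : n ∣ q) (hd : n + q = d) (e : Ext.{w} B A d) :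
    ∃ (Z : C) (c : Ext.{w} B Z n) (e' : Ext.{w} Z A q),
      Z ∈ M ∧ IsSpliceIn M c ∧ c.comp e' hd = e := by
  obtain ⟨j, rfl⟩ := Nat.exists_eq_add_of_le' hn
  obtain rfl : j + q + 1 = d := by lia
  obtain ⟨K, δ, e₁, hδ, rfl⟩ := hM.1.exists_hasMiddleTermIn_comp_eq e
  have hvanish : ∀ N ∈ M, ∀ i, q < i → i ≤ j + q → ∀ x : Ext.{w} N A i, x = 0 :=
    fun N hN i hqi hi => hM.2 N hN A hA i (by lia) fun hdvd => by
      have hle := Nat.le_of_dvd (by lia) (Nat.dvd_sub hdvd hq)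
      lia
  obtain ⟨Z, c, e', hc, rfl, hZ⟩ :=
    hM.1.exists_isSpliceIn_comp_eq_of_ext_eq_zero j.lt_succ_self rfl e₁ hvanish
  exact ⟨Z, δ.comp c (add_comm 1 j), e',
    hM.1.mem_of_ext_to_eq_zero fun X hX i hi hij => hZ X hX i hi (by lia),
    hδ.isSpliceIn.comp hc _, Ext.comp_assoc _ _ _ _ _ (by lia)⟩

lemma isYonedaComposite_isNExactClass (hM : IsNZClusterTilting.{w} n M) (hn : 1 ≤ n) {k : ℕ}
    {B A : C} (hB : B ∈ M) (hA : A ∈ M) {d : ℕ} (hd : (k + 1) * n = d) (e : Ext.{w} B A d) :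
    IsYonedaComposite (IsNExactClass M (n := n)) (k + 1) e := by
  induction k generalizing B d with
  | zero =>
    obtain rfl : n = d := by lia
    exact .single ((hM.1.isSpliceIn hn hB e).isNExactClass hA hB)
  | succ k ih =>
    have hd' : n + (k + 1) * n = d := by lia
    obtain ⟨Z, c, e', hZ, hc, rfl⟩ :=
      hM.exists_mem_isSpliceIn_comp_eq hn hA (n.dvd_mul_left (k + 1)) hd' e
    have hcomp := (IsYonedaComposite.single (hc.isNExactClass hZ hB)).comp (ih hZ rfl e') hd'
    rwa [add_comm] at hcomp

end IsNZClusterTilting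

end ClusterTilting

/-- Let `𝓔` be an abelian category, `n ≥ 1`, `M` an `nℤ`-cluster tilting
subcategory of `𝓔`, `k ≥ 1`, and `ξ : 0 → X⁰ → E¹ → ⋯ → E^{kn} → X^{kn+1} → 0` an exact
sequence in `𝓔` with `X⁰, X^{kn+1} ∈ M`.  Then `ξ` is Yoneda equivalent to a splice of `k`
`n`-exact sequences in `M`: there are objects `Z 0 = X⁰, Z 1, …, Z k = X^{kn+1}` in `M` and
`n`-exact sequences in `M` from `Z j` to `Z (j+1)` whose Yoneda composite in
`Ext^{kn}(X^{kn+1},X⁰)` equals `[ξ]`. -/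
theorem kn_fold_extension_splits_of_nZ_cluster_tilting
    {C : Type u} [Category.{v} C] [Abelian C] [HasExt.{w} C]
    (n : ℕ) (hn : 1 ≤ n) (M : Set C) (hM : IsNZClusterTilting n M)
    (k : ℕ) (hk : 1 ≤ k)
    (S : ExactExtension C (k * n)) (h0 : S.Y 0 ∈ M) (h1 : S.Y (k * n + 1) ∈ M) :
    ∃ (Z : ℕ → C) (c : ∀ j, Ext (Z (j + 1)) (Z j) n),
      (∀ j ≤ k, Z j ∈ M) ∧
      (∀ j < k, ∃ (T : ExactExtension C n) (e0 : T.Y 0 = Z j) (e1 : T.Y (n + 1) = Z (j + 1)),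
        (∀ i ≤ n + 1, T.Y i ∈ M) ∧ extTransport T.extClass e1 e0 = c j) ∧
      ∃ (z0 : Z 0 = S.Y 0) (zk : Z k = S.Y (k * n + 1)),
        extTransport (chainCompose n Z c k) zk z0 = S.extClass := by
  obtain ⟨k, rfl⟩ := Nat.exists_eq_add_of_le' hk
  obtain ⟨Z, c, hc, -, z0, zk, _, hchain⟩ :=
    (hM.isYonedaComposite_isNExactClass hn h1 h0 rfl S.extClass).exists_chainCompose_eq
  refine ⟨Z, c, ?_, hc, z0, zk, hchain⟩
  rintro (_ | j) hj
  · rwa [z0]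
  · obtain ⟨T, -, e1, hT, -⟩ := hc j hj
    exact e1 ▸ hT (n + 1) le_rfl

end NZPaper
end
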